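/- arXiv:1901.08270 — 5 statements merged into one kernel-verified Lean document; each statement's English description precedes it below -/
import Mathlib

section
/- Let h, h' be natural numbers and let f : [0,h] → ℝ and g : [0,h'] → ℝ be concave functions that are affine on each interval [i, i+1] for integers 0 ≤ i < h (respectively 0 ≤ i < h'). Then for every integer x with 0 ≤ x ≤ h + h', the tropical convolution satisfies (f ⊗ g)(x) = max { f(a) + g(b) : a, b ∈ ℕ, a ≤ h, b ≤ h', a + b = x }; that is, in the supremum defining f ⊗ g at integer points one may restrict the variables a and b to natural numbers. -/
/-- The tropical convolution of `f : [0,h] → ℝ` and `g : [0,h'] → ℝ`: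
`(f ⊗ g)(x) = sup { f a + g b : 0 ≤ a ≤ h, 0 ≤ b ≤ h', a + b = x }`. -/
noncomputable def tropConv (h h' : ℝ) (f g : ℝ → ℝ) : ℝ → ℝ := fun x =>
  sSup {y | ∃ a b : ℝ, 0 ≤ a ∧ a ≤ h ∧ 0 ≤ b ∧ b ≤ h' ∧ a + b = x ∧ y = f a + g b}

/-- If `f` and `g` are concave polygons on `[0,h]` and `[0,h']` with integer break
abscissas (i.e. affine on each interval `[i, i+1]`), then at integer points the
supremum defining the tropical convolution may be restricted to natural number
variables. -/
theorem tropConv_eq_sup_nat (h h' : ℕ) (f g : ℝ → ℝ)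
    (hf : ConcaveOn ℝ (Set.Icc 0 (h : ℝ)) f)
    (hg : ConcaveOn ℝ (Set.Icc 0 (h' : ℝ)) g)
    (hfa : ∀ i : ℕ, i < h →
      ∃ m c : ℝ, ∀ x ∈ Set.Icc (i : ℝ) ((i : ℝ) + 1), f x = m * x + c)
    (hga : ∀ i : ℕ, i < h' →
      ∃ m c : ℝ, ∀ x ∈ Set.Icc (i : ℝ) ((i : ℝ) + 1), g x = m * x + c) :
    ∀ x : ℕ, x ≤ h + h' →
      tropConv (h : ℝ) (h' : ℝ) f g (x : ℝ) =
        sSup {y | ∃ a b : ℕ, a ≤ h ∧ b ≤ h' ∧ a + b = x ∧ y = f (a : ℝ) + g (b : ℝ)} := by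
  intro x hx
  unfold tropConv
  apply csSup_eq_csSup_of_forall_exists_le
  · rintro y ⟨a, b, ha0, hah, hb0, hbh, hab, rfl⟩
    have h1 : ((⌊a⌋₊ : ℕ) : ℝ) ≤ a := Nat.floor_le ha0
    have h2 : a < ((⌊a⌋₊ : ℕ) : ℝ) + 1 := Nat.lt_floor_add_one a
    generalize ⌊a⌋₊ = i at h1 h2
    rcases h1.eq_or_lt with h3 | h3
    · have hix : i ≤ x := by
        have : (i : ℝ) ≤ x := by linarith
        exact_mod_cast this
      obtain ⟨j, rfl⟩ := Nat.exists_eq_add_of_le hix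
      push_cast at hab
      have hb : b = j := by linarith
      subst hb
      subst h3
      exact ⟨_, ⟨i, j, by exact_mod_cast hah, by exact_mod_cast hbh, rfl, rfl⟩, le_rfl⟩
    · have hih : i < h := by
        have : (i : ℝ) < h := by linarith
        exact_mod_cast this
      have hix : i + 1 ≤ x := by
        have : (i : ℝ) < x := by linarith
        exact_mod_cast this
      obtain ⟨j, rfl⟩ := Nat.exists_eq_add_of_le hix
      push_cast at hab
      have hjh : j < h' := by
        have : (j : ℝ) < h' := by linarith
        exact_mod_cast this
      obtain ⟨m, c, hm⟩ := hfa i hih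
      obtain ⟨m', c', hm'⟩ := hga j hjh
      have e1 := hm a ⟨by linarith, by linarith⟩
      have e2 := hm' b ⟨by linarith, by linarith⟩
      have hb : b = i + 1 + j - a := by linarith
      rcases le_total m' m with hmm | hmm
      · refine ⟨_, ⟨i + 1, j, by omega, by omega, by omega, rfl⟩, ?_⟩
        have e3 := hm (i + 1) ⟨by linarith, by linarith⟩
        have e4 := hm' j ⟨by linarith, by linarith⟩
        push_cast
        rw [e1, e2, e3, e4, hb]
        nlinarith [mul_nonneg (sub_nonneg.2 hmm) (sub_nonneg.2 h2.le)]
      · refine ⟨_, ⟨i, j + 1, by omega, by omega, by omega, rfl⟩, ?_⟩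
        have e3 := hm i ⟨by linarith, by linarith⟩
        have e4 := hm' (j + 1) ⟨by linarith, by linarith⟩
        push_cast
        rw [e1, e2, e3, e4, hb]
        nlinarith [mul_nonneg (sub_nonneg.2 hmm) (sub_nonneg.2 h3.le)]
  · rintro y ⟨a, b, ha, hb, hab, rfl⟩
    exact ⟨_, ⟨a, b, by positivity, by exact_mod_cast ha, by positivity, by exact_mod_cast hb,
      by exact_mod_cast hab, rfl⟩, le_rfl⟩
end

section
/- Let p be a prime, V a finite-dimensional ℚ_p-vector space, and M a ℤ_p-submodule of V (where V is regarded as a ℤ_p-module by restriction of scalars). Then there exist natural numbers n and m and a ℤ_p-linear isomorphism M ≅ ℤ_p^n × ℚ_p^m, where ℚ_p^m is regarded as a ℤ_p-module by restriction of scalars. In other words, every ℤ_p-submodule of a finite-dimensional ℚ_p-vector space is isomorphic to the direct sum of a free ℤ_p-module of finite rank and a finite-dimensional ℚ_p-vector space. -/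
theorem padic_aux_smul (p : ℕ) [Fact p.Prime]
    (V : Type*) [AddCommGroup V] [Module ℚ_[p] V]
    [Module ℤ_[p] V] [IsScalarTower ℤ_[p] ℚ_[p] V]
    (N : Submodule ℤ_[p] V) (c : ℚ_[p]) (hc : ‖c‖ ≤ 1) (x : V) (hx : x ∈ N) : c • x ∈ N := by
  obtain ⟨z, hz⟩ : ∃ z : ℤ_[p], algebraMap ℤ_[p] ℚ_[p] z = c := ⟨⟨c, hc⟩, rfl⟩
  rw [← hz, algebraMap_smul]
  exact N.smul_mem z hx

theorem padic_aux_bdd (p : ℕ) [Fact p.Prime] {ι : Type*} [Fintype ι]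
    (N : Submodule ℤ_[p] (ι → ℚ_[p])) (h1 : ∀ x : ι → ℚ_[p], ‖x‖ ≤ 1 → x ∈ N)
    (h2 : ∀ x : ι → ℚ_[p], (∀ k : ℕ, ((p : ℚ_[p]) ^ k)⁻¹ • x ∈ N) → x = 0) :
    ∃ k : ℕ, ∀ x ∈ N, ‖(p : ℚ_[p]) ^ k • x‖ ≤ 1 := by
  have hp0 : (p : ℚ_[p]) ≠ 0 := by exact_mod_cast (Fact.out : p.Prime).ne_zero
  have hdown : ∀ (x : ι → ℚ_[p]) (k : ℕ), x ∈ N → (p : ℚ_[p]) ^ k • x ∈ N := by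
    intro x k hx
    have := N.smul_mem ((p : ℤ_[p]) ^ k) hx
    convert this using 1
    ext i
    simp [Algebra.smul_def]
  have hclosed : IsClosed (N : Set (ι → ℚ_[p])) := by
    have ho : IsOpen (N.toAddSubgroup : Set (ι → ℚ_[p])) := by
      refine AddSubgroup.isOpen_of_mem_nhds _ (g := 0) ?_
      filter_upwards [Metric.closedBall_mem_nhds (0 : ι → ℚ_[p]) one_pos] with x hx
      exact h1 x (by simpa using hx)
    exact AddSubgroup.isClosed_of_isOpen _ ho
  let K : ℕ → Set (ι → ℚ_[p]) := fun k =>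
    Metric.sphere 0 1 ∩ {x | ((p : ℚ_[p]) ^ k)⁻¹ • x ∈ N}
  have hKc : ∀ k, IsClosed (K k) := fun k =>
    Metric.isClosed_sphere.inter (hclosed.preimage (continuous_const_smul _))
  have hex : ∃ k, K k = ∅ := by
    by_contra! hne
    obtain ⟨x, hx⟩ := IsCompact.nonempty_iInter_of_sequence_nonempty_isCompact_isClosed K
      (fun k x hx => ⟨hx.1, by
        have := hdown _ 1 hx.2
        simp only [Set.mem_ofPred_eq]
        convert this using 1
        rw [smul_smul]
        congr 1
        field_simp
        ring⟩) hne
      ((isCompact_sphere _ _).inter_right (hclosed.preimage (continuous_const_smul _))) hKc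
    rw [Set.mem_iInter] at hx
    have h0 := h2 x fun k => (hx k).2
    have := (hx 0).1
    simp [h0] at this
  obtain ⟨k, hk⟩ := hex
  refine ⟨k, fun x hx => ?_⟩
  by_contra! hlt
  have hne : x ≠ 0 := by rintro rfl; simp at hlt; linarith
  -- norm of x is attained
  have hnorm : ∃ i, ‖x i‖ = ‖x‖ := by
    have : Nonempty ι := by
      by_contra hc
      rw [not_nonempty_iff] at hc
      exact hne (Subsingleton.elim _ _)
    obtain ⟨i, hi⟩ := Finite.exists_max fun i => ‖x i‖
    exact ⟨i, le_antisymm (norm_le_pi_norm x i) ((pi_norm_le_iff_of_nonneg (norm_nonneg _)).2 hi)⟩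
  obtain ⟨i, hi⟩ := hnorm
  have hxi : x i ≠ 0 := by
    rw [← norm_ne_zero_iff, hi, norm_ne_zero_iff]; exact hne
  have hv := Padic.norm_eq_zpow_neg_valuation hxi
  have hp1 : (1 : ℝ) < p := by exact_mod_cast (Fact.out : p.Prime).one_lt
  have hp0' : (p : ℝ) ≠ 0 := by positivity
  rw [norm_smul, norm_pow, Padic.norm_p, ← hi, hv, inv_pow, ← zpow_natCast, ← zpow_neg,
    ← zpow_add₀ hp0', one_lt_zpow_iff_right₀ hp1] at hlt
  obtain ⟨j, hj⟩ : ∃ j : ℕ, -(x i).valuation = k + j := ⟨(-(x i).valuation - k).toNat, by omega⟩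
  have hmem : (p : ℚ_[p]) ^ (k + j) • x ∈ K k := by
    constructor
    · rw [mem_sphere_zero_iff_norm, norm_smul, norm_pow, Padic.norm_p, ← hi, hv, hj, inv_pow,
        ← Nat.cast_add, zpow_natCast]
      exact inv_mul_cancel₀ (pow_ne_zero _ hp0')
    · have := hdown x j hx
      simp only [Set.mem_ofPred_eq]
      convert this using 1
      rw [smul_smul, pow_add, inv_mul_cancel_left₀ (pow_ne_zero _ hp0)]
  rw [hk] at hmem
  exact hmem

theorem padic_aux_fg (p : ℕ) [Fact p.Prime]
    (V : Type*) [AddCommGroup V] [Module ℚ_[p] V] [FiniteDimensional ℚ_[p] V]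
    [Module ℤ_[p] V] [IsScalarTower ℤ_[p] ℚ_[p] V]
    (N : Submodule ℤ_[p] V)
    (h2 : ∀ x : V, (∀ k : ℕ, ((p : ℚ_[p]) ^ k)⁻¹ • x ∈ N) → x = 0) : N.FG := by
  have hp0 : (p : ℚ_[p]) ≠ 0 := by exact_mod_cast (Fact.out : p.Prime).ne_zero
  obtain ⟨b, hbN, hspan, hli⟩ := exists_linearIndependent ℚ_[p] (N : Set V)
  have : Finite b := hli.finite
  have : Fintype b := Fintype.ofFinite b
  let f : (b → ℚ_[p]) →ₗ[ℚ_[p]] V := Fintype.linearCombination ℚ_[p] ((↑) : b → V)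
  have hfinj : Function.Injective f := hli.fintypeLinearCombination_injective
  have hfr : (N : Set V) ⊆ Set.range f := by
    intro x hx
    have : x ∈ LinearMap.range f := by
      rw [Fintype.range_linearCombination, Subtype.range_coe, hspan]
      exact Submodule.subset_span hx
    exact this
  let f' : (b → ℚ_[p]) →ₗ[ℤ_[p]] V := f.restrictScalars ℤ_[p]
  obtain ⟨k, hk⟩ := padic_aux_bdd p (N.comap f') (by
    intro x hx
    change f x ∈ N
    rw [Fintype.linearCombination_apply]
    refine N.sum_mem fun i _ => ?_
    exact padic_aux_smul p V N _ ((norm_le_pi_norm x i).trans hx) _ (hbN i.2)) (by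
    intro x hx
    apply hfinj
    rw [map_zero]
    refine h2 _ fun k => ?_
    rw [← map_smul]
    exact hx k)
  let g : (b → ℤ_[p]) →ₗ[ℤ_[p]] V :=
    f' ∘ₗ (LinearMap.lsmul ℚ_[p] (b → ℚ_[p]) ((p : ℚ_[p]) ^ k)⁻¹).restrictScalars ℤ_[p] ∘ₗ
      (Algebra.linearMap ℤ_[p] ℚ_[p]).compLeft b
  have hle : N ≤ LinearMap.range g := by
    intro x hx
    obtain ⟨y, rfl⟩ := hfr hx
    have := hk y hx
    refine ⟨fun i => ⟨((p : ℚ_[p]) ^ k • y) i, (norm_le_pi_norm _ i).trans this⟩, ?_⟩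
    change f _ = f y
    congr 1
    change ((p : ℚ_[p]) ^ k)⁻¹ • ((p : ℚ_[p]) ^ k • y) = y
    rw [smul_smul, inv_mul_cancel₀ (pow_ne_zero _ hp0), one_smul]
  have hn : IsNoetherian ℤ_[p] (LinearMap.range g) := inferInstance
  exact isNoetherian_submodule.1 hn N hle

/-- Every `ℤ_p`-submodule of a finite-dimensional `ℚ_p`-vector space is isomorphic,
as a `ℤ_p`-module, to the direct sum of a finite free `ℤ_p`-module and a
finite-dimensional `ℚ_p`-vector space. -/
theorem padicInt_submodule_iso (p : ℕ) [Fact p.Prime]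
    (V : Type*) [AddCommGroup V] [Module ℚ_[p] V] [FiniteDimensional ℚ_[p] V]
    [Module ℤ_[p] V] [IsScalarTower ℤ_[p] ℚ_[p] V]
    (M : Submodule ℤ_[p] V) :
    ∃ n m : ℕ,
      Nonempty (M ≃ₗ[ℤ_[p]] ((Fin n → ℤ_[p]) × (Fin m → ℚ_[p]))) := by
  have hp0 : (p : ℚ_[p]) ≠ 0 := by exact_mod_cast (Fact.out : p.Prime).ne_zero
  let D : Submodule ℚ_[p] V :=
    { carrier := {v | ∀ c : ℚ_[p], c • v ∈ M}
      add_mem' := fun {a b} ha hb c => by rw [smul_add]; exact M.add_mem (ha c) (hb c)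
      zero_mem' := fun c => by rw [smul_zero]; exact M.zero_mem
      smul_mem' := fun a v hv c => by rw [smul_smul]; exact hv _ }
  have hDM : ∀ v ∈ D, v ∈ M := fun v hv => by simpa using hv 1
  obtain ⟨W, hW⟩ := D.exists_isCompl
  let N : Submodule ℤ_[p] V := M ⊓ W.restrictScalars ℤ_[p]
  have hNfg : N.FG := by
    refine padic_aux_fg p V N fun x hx => ?_
    have hxW : x ∈ W := by simpa using (hx 0).2
    have hxD : x ∈ D := by
      intro c
      obtain ⟨k, hk⟩ : ∃ k : ℕ, ‖c * (p : ℚ_[p]) ^ k‖ ≤ 1 := by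
        by_cases hc : c = 0
        · exact ⟨0, by simp [hc]⟩
        refine ⟨(-c.valuation).toNat, ?_⟩
        have hp1 : (1 : ℝ) < p := by exact_mod_cast (Fact.out : p.Prime).one_lt
        have hp0' : (p : ℝ) ≠ 0 := by positivity
        rw [norm_mul, norm_pow, Padic.norm_p, Padic.norm_eq_zpow_neg_valuation hc, inv_pow,
          ← zpow_natCast, ← zpow_neg, ← zpow_add₀ hp0']
        exact zpow_le_one_of_nonpos₀ hp1.le (by omega)
      have h := padic_aux_smul p V M _ hk _ (hx k).1
      rwa [smul_smul, mul_inv_cancel_right₀ (pow_ne_zero _ hp0)] at h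
    exact (Submodule.disjoint_def.1 hW.disjoint) x hxD hxW
  have : Module.Finite ℤ_[p] N := Module.Finite.iff_fg.2 hNfg
  have : Module.IsTorsionFree ℤ_[p] V := Module.IsTorsionFree.trans_faithfulSMul ℤ_[p] ℚ_[p] V
  have : Module.Free ℤ_[p] N := inferInstance
  let eN := (Module.finBasis ℤ_[p] N).equivFun
  let eD := (Module.finBasis ℚ_[p] D).equivFun.restrictScalars ℤ_[p]
  let iN : N →ₗ[ℤ_[p]] M := Submodule.inclusion inf_le_left
  let iD : D →ₗ[ℤ_[p]] M :=
    LinearMap.codRestrict M (D.subtype.restrictScalars ℤ_[p]) fun v => hDM v v.2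
  let F : (N × D) →ₗ[ℤ_[p]] M := iN.coprod iD
  have hF : ∀ x, (F x : V) = (x.1 : V) + (x.2 : V) := fun x => rfl
  have hbij : Function.Bijective F := by
    constructor
    · rw [injective_iff_map_eq_zero]
      rintro ⟨⟨a, ha⟩, ⟨d, hd⟩⟩ h
      have h' : a + d = 0 := by
        have := hF (⟨a, ha⟩, ⟨d, hd⟩)
        rw [h] at this
        exact this.symm
      have hd0 : d = 0 := by
        refine (Submodule.disjoint_def.1 hW.disjoint) d hd ?_
        rw [eq_neg_of_add_eq_zero_right h']
        exact W.neg_mem ha.2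
      subst hd0
      have ha0 : a = 0 := by simpa using h'
      subst ha0
      rfl
    · rintro ⟨x, hx⟩
      have hxt : x ∈ D ⊔ W := by rw [hW.sup_eq_top]; trivial
      obtain ⟨d, hd, w, hw, rfl⟩ := Submodule.mem_sup.1 hxt
      have hwM : w ∈ M := by
        have := M.sub_mem hx (hDM d hd)
        simpa using this
      refine ⟨(⟨w, hwM, hw⟩, ⟨d, hd⟩), Subtype.ext ?_⟩
      rw [hF]
      exact add_comm _ _
  exact ⟨_, _, ⟨(LinearEquiv.ofBijective F hbij).symm.trans (eN.prodCongr eD)⟩⟩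
end

section
/- Let p be a prime. Every short exact sequence of ℤ_p-modules 0 → ℤ_p → M → ℚ_p → 0 splits. Equivalently: if M is a ℤ_p-module and f : M → ℚ_p is a surjective ℤ_p-linear map whose kernel is isomorphic to ℤ_p as a ℤ_p-module, then there exists a ℤ_p-linear map s : ℚ_p → M with f ∘ s = id. In other words, Ext¹_{ℤ_p}(ℚ_p, ℤ_p) = 0. -/
theorem padic_aux_seq (p : ℕ) [Fact p.Prime] (a : ℕ → ℤ_[p]) :
    ∃ b : ℕ → ℤ_[p], ∀ n, b n = a n + (p : ℤ_[p]) * b (n + 1) := by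
  have hs : ∀ n, Summable (fun k => (p : ℤ_[p]) ^ k * a (n + k)) := by
    intro n
    have hp1 : (1 : ℝ) < p := by exact_mod_cast (Fact.out : p.Prime).one_lt
    refine Summable.of_norm_bounded (g := fun k => ((p : ℝ)⁻¹) ^ k)
      (summable_geometric_of_lt_one (by positivity) (inv_lt_one_of_one_lt₀ hp1)) ?_
    intro k
    rw [norm_mul, norm_pow, PadicInt.norm_p]
    exact mul_le_of_le_one_right (by positivity) (PadicInt.norm_le_one _)
  refine ⟨fun n => ∑' k, (p : ℤ_[p]) ^ k * a (n + k), fun n => ?_⟩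
  dsimp only
  rw [(hs n).tsum_eq_zero_add, ← (hs (n+1)).tsum_mul_left]
  congr 1
  · simp
  · refine tsum_congr fun k => ?_
    rw [show n + (k + 1) = n + 1 + k by ring]
    ring

/-- Every short exact sequence of `ℤ_p`-modules `0 → ℤ_p → M → ℚ_p → 0` splits:
if `f : M → ℚ_p` is a surjective `ℤ_p`-linear map whose kernel is isomorphic to
`ℤ_p`, then `f` has a `ℤ_p`-linear section. In other words,
`Ext¹_{ℤ_p}(ℚ_p, ℤ_p) = 0`. -/
theorem padic_ext_vanishes (p : ℕ) [Fact p.Prime]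
    (M : Type*) [AddCommGroup M] [Module ℤ_[p] M]
    (f : M →ₗ[ℤ_[p]] ℚ_[p]) (hf : Function.Surjective f)
    (hker : Nonempty ((LinearMap.ker f) ≃ₗ[ℤ_[p]] ℤ_[p])) :
    ∃ s : ℚ_[p] →ₗ[ℤ_[p]] M, f ∘ₗ s = LinearMap.id := by
  obtain ⟨e⟩ := hker
  have hp0 : (p : ℚ_[p]) ≠ 0 := by exact_mod_cast (Fact.out : p.Prime).ne_zero
  have hsm : ∀ (a : ℤ_[p]) (x : ℚ_[p]), a • x = (a : ℚ_[p]) * x := fun a x => rfl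
  choose m hm using fun n : ℕ => hf (((p : ℚ_[p]) ^ n)⁻¹)
  have hk : ∀ n, (p : ℤ_[p]) • m (n + 1) - m n ∈ LinearMap.ker f := by
    intro n
    rw [LinearMap.mem_ker, map_sub, map_smul, hm, hm, hsm]
    push_cast
    field_simp
    ring
  obtain ⟨b, hb⟩ := padic_aux_seq p (fun n => e ⟨_, hk n⟩)
  let c : ℕ → M := fun n => m n + (e.symm (b n) : M)
  have hc : ∀ n, (p : ℤ_[p]) • c (n + 1) = c n := by
    intro n
    have h := congrArg (fun z => (e.symm z : M)) (hb n)
    simp only [map_add, LinearEquiv.symm_apply_apply, ← smul_eq_mul, map_smul,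
      Submodule.coe_add, Submodule.coe_smul] at h
    simp only [c, smul_add]
    rw [h]
    abel
  have hfc : ∀ n, f (c n) = ((p : ℚ_[p]) ^ n)⁻¹ := by
    intro n
    have := (e.symm (b n)).2
    rw [LinearMap.mem_ker] at this
    simp only [c, map_add, hm, this, add_zero]
  have hck : ∀ n k, (p : ℤ_[p]) ^ k • c (n + k) = c n := by
    intro n k
    induction k with
    | zero => simp
    | succ k ih => rw [pow_succ, mul_smul, ← add_assoc, hc, ih]
  have hex : ∀ x : ℚ_[p], ∃ (n : ℕ) (a : ℤ_[p]), (a : ℚ_[p]) = (p : ℚ_[p]) ^ n * x := by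
    intro x
    have hp1 : (1 : ℝ) < p := by exact_mod_cast (Fact.out : p.Prime).one_lt
    obtain ⟨n, hn⟩ := pow_unbounded_of_one_lt ‖x‖ hp1
    refine ⟨n, ⟨(p : ℚ_[p]) ^ n * x, ?_⟩, rfl⟩
    rw [norm_mul, norm_pow, Padic.norm_p, inv_pow, inv_mul_le_iff₀ (by positivity)]
    linarith
  choose N A hA using hex
  have key : ∀ (x : ℚ_[p]) (n : ℕ) (a : ℤ_[p]), (a : ℚ_[p]) = (p : ℚ_[p]) ^ n * x →
      a • c n = A x • c (N x) := by
    intro x n a ha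
    rw [← hck n (N x), ← hck (N x) n, smul_smul, smul_smul, add_comm n]
    congr 1
    apply PadicInt.ext
    push_cast
    rw [ha, hA]
    ring
  refine ⟨{ toFun := fun x => A x • c (N x), map_add' := ?_, map_smul' := ?_ }, ?_⟩
  · intro x y
    rw [← key (x + y) (N x + N y) ((p : ℤ_[p]) ^ (N y) * A x + (p : ℤ_[p]) ^ (N x) * A y),
      ← key x (N x + N y) ((p : ℤ_[p]) ^ (N y) * A x),
      ← key y (N x + N y) ((p : ℤ_[p]) ^ (N x) * A y), add_smul]
    all_goals
      push_cast
      simp only [hA]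
      ring
  · intro r x
    dsimp only [RingHom.id_apply]
    rw [← key (r • x) (N x) (r * A x), mul_smul]
    push_cast
    rw [hA, hsm]
    ring
  · ext x
    change f (A x • c (N x)) = x
    rw [map_smul, hfc, hsm, hA]
    field_simp
end

section
/- Let p be a prime, V a finite-dimensional ℚ_p-vector space, and L a ℤ_p-submodule of V. Let L_div = { x ∈ L : for all c ∈ ℚ_p, c • x ∈ L }, the largest ℚ_p-subspace of V contained in L (equivalently, the maximal divisible ℤ_p-submodule of L). Then the quotient L / L_div is a finitely generated free ℤ_p-module. -/
open IsLocalRing TensorProduct in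
theorem aux_finite (p : ℕ) [Fact p.Prime] (M : Type*) [AddCommGroup M] [Module ℤ_[p] M]
    [Module.IsTorsionFree ℤ_[p] M] [IsHausdorff (maximalIdeal ℤ_[p]) M]
    (hr : Module.rank ℤ_[p] M < Cardinal.aleph0) : Module.Finite ℤ_[p] M := by
  let k := ResidueField ℤ_[p]
  let w := Module.Free.chooseBasis k (k ⊗[ℤ_[p]] M)
  have ⟨v, eq⟩ := (TensorProduct.mk_surjective ℤ_[p] M k
    Ideal.Quotient.mk_surjective).comp_left w
  have hv : LinearIndependent ℤ_[p] v :=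
    Module.IsLocalRing.linearIndependent_of_flat _ (eq.symm.subst (motive := fun g => LinearIndependent k g) w.linearIndependent)
  have hfin : Finite (Module.Free.ChooseBasisIndex k (k ⊗[ℤ_[p]] M)) :=
    Cardinal.mk_lt_aleph0_iff.mp (lt_of_le_of_lt hv.cardinal_le_rank hr)
  have := Fintype.ofFinite (Module.Free.ChooseBasisIndex k (k ⊗[ℤ_[p]] M))
  have hsm : ∀ (ι : Type _) [Fintype ι] (n : ℕ) (x : ι → ℤ_[p]),
      x ∈ ((maximalIdeal ℤ_[p]) ^ n • ⊤ : Submodule ℤ_[p] (ι → ℤ_[p])) ↔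
      ∀ i, x i ∈ (maximalIdeal ℤ_[p]) ^ n := by
    intro ι _ n x
    rw [PadicInt.maximalIdeal_eq_span_p, Ideal.span_singleton_pow]
    simp only [Submodule.ideal_span_singleton_smul, Submodule.mem_smul_pointwise_iff_exists,
      Ideal.mem_span_singleton]
    constructor
    · rintro ⟨y, -, rfl⟩ i
      exact ⟨y i, rfl⟩
    · intro h
      choose y hy using h
      exact ⟨y, trivial, funext fun i => (hy i).symm⟩
  have hpre : IsPrecomplete (maximalIdeal ℤ_[p])
      (Module.Free.ChooseBasisIndex k (k ⊗[ℤ_[p]] M) → ℤ_[p]) := by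
    refine ⟨fun f hf => ?_⟩
    have key : ∀ i, ∃ l : ℤ_[p], ∀ n,
        f n i ≡ l [SMOD ((maximalIdeal ℤ_[p]) ^ n • ⊤ : Submodule ℤ_[p] ℤ_[p])] := by
      intro i
      refine IsPrecomplete.prec (I := maximalIdeal ℤ_[p]) inferInstance (f := fun n => f n i) ?_
      intro m n hmn
      have := hf hmn
      rw [SModEq.sub_mem, hsm] at this
      rw [SModEq.sub_mem]
      simpa using this i
    choose l hl using key
    refine ⟨l, fun n => ?_⟩
    rw [SModEq.sub_mem, hsm]
    intro i
    have := hl i n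
    rw [SModEq.sub_mem] at this
    simpa using this
  refine Module.Finite.of_surjective (Fintype.linearCombination ℤ_[p] v)
    (surjective_of_mkQ_comp_surjective (I := maximalIdeal ℤ_[p]) ?_)
  intro y
  obtain ⟨y, rfl⟩ := Submodule.Quotient.mk_surjective _ y
  let z : k ⊗[ℤ_[p]] M := 1 ⊗ₜ y
  choose c hc using fun i => Ideal.Quotient.mk_surjective (I := maximalIdeal ℤ_[p]) (w.repr z i)
  refine ⟨c, ?_⟩
  apply (TensorProduct.quotTensorEquivQuotSMul M (maximalIdeal ℤ_[p])).symm.injective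
  simp only [LinearMap.comp_apply, Submodule.mkQ_apply]
  rw [TensorProduct.quotTensorEquivQuotSMul_symm_mk, TensorProduct.quotTensorEquivQuotSMul_symm_mk]
  change _ = z
  rw [← w.sum_repr z, Fintype.linearCombination_apply, TensorProduct.tmul_sum]
  refine Finset.sum_congr rfl fun i _ => ?_
  rw [← hc i, ← congr_fun eq i]
  change _ = (algebraMap ℤ_[p] k (c i)) • ((1 : k) ⊗ₜ[ℤ_[p]] v i)
  rw [algebraMap_smul, TensorProduct.tmul_smul]
  rfl

/-- Let `L` be a `ℤ_p`-submodule of a finite-dimensional `ℚ_p`-vector space `V`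
and let `Ldiv` be its divisible part, i.e. the `ℤ_p`-submodule with underlying set
`{x ∈ L | ∀ c : ℚ_p, c • x ∈ L}` (the largest `ℚ_p`-subspace of `V` contained in
`L`). Then the quotient `L / Ldiv` is a finitely generated free `ℤ_p`-module. -/
theorem quotient_divPart_finite_free (p : ℕ) [Fact p.Prime]
    (V : Type*) [AddCommGroup V] [Module ℚ_[p] V] [FiniteDimensional ℚ_[p] V]
    [Module ℤ_[p] V] [IsScalarTower ℤ_[p] ℚ_[p] V]
    (L Ldiv : Submodule ℤ_[p] V)
    (hdiv : (Ldiv : Set V) = {x | x ∈ L ∧ ∀ c : ℚ_[p], c • x ∈ L}) :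
    Module.Finite ℤ_[p] (↥L ⧸ Submodule.comap L.subtype Ldiv) ∧
      Module.Free ℤ_[p] (↥L ⧸ Submodule.comap L.subtype Ldiv) := by
  have hmem : ∀ x, x ∈ Ldiv ↔ x ∈ L ∧ ∀ c : ℚ_[p], c • x ∈ L := fun x => by
    rw [← SetLike.mem_coe, hdiv]; rfl
  have hp0 : (p : ℚ_[p]) ≠ 0 := by exact_mod_cast (Fact.out : p.Prime).ne_zero
  have hq : ∀ (a : ℤ_[p]) (x : V), a • x = (a : ℚ_[p]) • x := fun a x =>
    (algebraMap_smul ℚ_[p] a x).symm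
  have htf : Module.IsTorsionFree ℤ_[p] (↥L ⧸ Submodule.comap L.subtype Ldiv) := by
    refine Module.IsTorsionFree.of_smul_eq_zero fun a x h => ?_
    by_cases ha : a = 0
    · exact Or.inl ha
    right
    obtain ⟨x, rfl⟩ := Submodule.Quotient.mk_surjective _ x
    rw [← Submodule.Quotient.mk_smul, Submodule.Quotient.mk_eq_zero] at h
    rw [Submodule.Quotient.mk_eq_zero]
    rw [Submodule.mem_comap, hmem] at h ⊢
    refine ⟨x.2, fun c => ?_⟩
    have h2 := h.2 (c * (a : ℚ_[p])⁻¹)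
    have ha' : (a : ℚ_[p]) ≠ 0 := by simpa using ha
    simpa [hq, smul_smul, ha'] using h2
  have hH : IsHausdorff (IsLocalRing.maximalIdeal ℤ_[p])
      (↥L ⧸ Submodule.comap L.subtype Ldiv) := by
    refine ⟨fun x h => ?_⟩
    obtain ⟨x, rfl⟩ := Submodule.Quotient.mk_surjective _ x
    have key : ∀ n : ℕ, ((p : ℚ_[p]) ^ n)⁻¹ • (x : V) ∈ L := by
      intro n
      have := h n
      rw [SModEq.zero, PadicInt.maximalIdeal_eq_span_p, Ideal.span_singleton_pow,
        Submodule.ideal_span_singleton_smul, Submodule.mem_smul_pointwise_iff_exists] at this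
      obtain ⟨y, -, hy⟩ := this
      obtain ⟨y, rfl⟩ := Submodule.Quotient.mk_surjective _ y
      rw [← Submodule.Quotient.mk_smul, eq_comm, Submodule.Quotient.eq, Submodule.mem_comap,
        hmem] at hy
      have h2 := L.add_mem (hy.2 ((p : ℚ_[p]) ^ n)⁻¹) y.2
      simpa [hq, smul_sub, smul_smul, hp0] using h2
    rw [Submodule.Quotient.mk_eq_zero, Submodule.mem_comap, hmem]
    refine ⟨x.2, fun c => ?_⟩
    obtain ⟨n, hn⟩ : ∃ n : ℕ, ‖(p : ℚ_[p]) ^ n * c‖ ≤ 1 := by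
      obtain ⟨n, hn⟩ := pow_unbounded_of_one_lt ‖c‖
        (show (1 : ℝ) < p by exact_mod_cast (Fact.out : p.Prime).one_lt)
      refine ⟨n, ?_⟩
      have hpp : (0 : ℝ) < (p : ℝ) ^ n :=
        pow_pos (by exact_mod_cast (Fact.out : p.Prime).pos) n
      rw [norm_mul, norm_pow, Padic.norm_p, inv_pow, inv_mul_le_iff₀ hpp]
      linarith
    obtain ⟨a, ha⟩ : ∃ a : ℤ_[p], (a : ℚ_[p]) = (p : ℚ_[p]) ^ n * c := ⟨⟨_, hn⟩, rfl⟩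
    have := L.smul_mem a (key n)
    rw [hq, smul_smul, ha] at this
    convert this using 2
    · field_simp
    · rfl
  have hr : Module.rank ℤ_[p] (↥L ⧸ Submodule.comap L.subtype Ldiv) < Cardinal.aleph0 := by
    refine (rank_quotient_le _).trans_lt ((Submodule.rank_le L).trans_lt ?_)
    rw [← IsLocalization.rank_eq ℚ_[p] (nonZeroDivisors ℤ_[p]) le_rfl]
    exact Module.rank_lt_aleph0 _ _
  have hf := aux_finite p _ hr
  exact ⟨hf, inferInstance⟩
end

section
/- Let p be a prime and let ℤ_(p) denote the localization of ℤ at the prime ideal (p) (the ring of rational numbers with denominator prime to p). There exists a ℤ_(p)-module M and a short exact sequence of ℤ_(p)-modules 0 → ℤ_(p) → M → ℚ → 0 that does not split (i.e., the surjection M → ℚ admits no ℤ_(p)-linear section). Moreover, such an M is not a finitely generated ℤ_(p)-module, and its maximal divisible submodule is zero (the only divisible ℤ_(p)-submodule of M is 0). In particular, the analogue of the statement 'every submodule of a finite-dimensional vector space over the fraction field is a direct sum of a finite free module and a vector space' fails over the non-complete discrete valuation ring ℤ_(p). -/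
instance span_int_p_isPrime (p : ℕ) [hp : Fact p.Prime] :
    (Ideal.span ({(p : ℤ)} : Set ℤ)).IsPrime :=
  (Ideal.span_singleton_prime (by exact_mod_cast hp.out.ne_zero)).mpr
    (Nat.prime_iff_prime_int.mp hp.out)

/-- `ℤ_(p)`, the localization of `ℤ` at the prime ideal `(p)`. -/
abbrev ZpLoc (p : ℕ) [Fact p.Prime] : Type :=
  Localization.AtPrime (Ideal.span ({(p : ℤ)} : Set ℤ))

lemma zp_exists_irr (p : ℕ) [Fact p.Prime] : ∃ a : ℚ_[p], ∀ q : ℚ, (q : ℚ_[p]) ≠ a := by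
  by_contra! h
  have h1 : Function.Surjective (fun q : ℚ => (q : ℚ_[p])) := h
  have h2 := continuum_le_cardinal_of_nontriviallyNormedField ℚ_[p]
  have h3 : Countable ℚ_[p] := h1.countable
  have h4 := Cardinal.mk_le_aleph0 (α := ℚ_[p])
  exact absurd (h2.trans h4) (not_le.mpr Cardinal.aleph0_lt_continuum)

lemma zp_norm_le (p : ℕ) [Fact p.Prime] [Algebra (ZpLoc p) ℚ] (r : ZpLoc p) :
    ‖((algebraMap (ZpLoc p) ℚ r : ℚ) : ℚ_[p])‖ ≤ 1 := by
  obtain ⟨a, s, h⟩ := IsLocalization.exists_mk'_eq (Ideal.span ({(p : ℤ)} : Set ℤ)).primeCompl r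
  have h1 := IsLocalization.mk'_spec (ZpLoc p) a s
  rw [h] at h1
  have h2 := congrArg (algebraMap (ZpLoc p) ℚ) h1
  simp only [map_mul, eq_intCast, map_intCast] at h2
  have h3 := congrArg (fun q : ℚ => ‖(q : ℚ_[p])‖) h2
  simp only [Rat.cast_mul, Rat.cast_intCast, norm_mul] at h3
  have h4 : ‖((s : ℤ) : ℚ_[p])‖ = 1 := by
    apply le_antisymm (Padic.norm_int_le_one _)
    by_contra! hlt
    rw [Padic.norm_intCast_lt_one_iff] at hlt
    exact s.2 (Ideal.mem_span_singleton.mpr hlt)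
  rw [h4, mul_one] at h3
  rw [h3]
  exact Padic.norm_int_le_one _

lemma zp_exists_of_norm_le (p : ℕ) [hp : Fact p.Prime] [Algebra (ZpLoc p) ℚ] (q : ℚ)
    (hq : ‖(q : ℚ_[p])‖ ≤ 1) : ∃ r : ZpLoc p, algebraMap (ZpLoc p) ℚ r = q := by
  have hd : ¬ p ∣ q.den := by
    simpa [Nat.Prime.coprime_iff_not_dvd hp.out] using
      PadicInt.isUnit_iff.1 <| PadicInt.isUnit_den _ hq
  have hs : (q.den : ℤ) ∈ (Ideal.span ({(p : ℤ)} : Set ℤ)).primeCompl := by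
    intro h
    exact hd (by exact_mod_cast Ideal.mem_span_singleton.mp h)
  refine ⟨IsLocalization.mk' (ZpLoc p) q.num ⟨(q.den : ℤ), hs⟩, ?_⟩
  have h1 := IsLocalization.mk'_spec (ZpLoc p) q.num
    (⟨(q.den : ℤ), hs⟩ : (Ideal.span ({(p : ℤ)} : Set ℤ)).primeCompl)
  have h2 := congrArg (algebraMap (ZpLoc p) ℚ) h1
  simp only [map_mul, eq_intCast, map_intCast] at h2
  have h0 : (q.den : ℚ) ≠ 0 := by exact_mod_cast q.den_nz
  apply mul_right_cancel₀ h0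
  rw [Rat.mul_den_eq_num]
  simpa using h2

/-- The extension, inside `ℚ × ℚ`. -/
def zpExt (p : ℕ) [Fact p.Prime] [Algebra (ZpLoc p) ℚ] (a : ℚ_[p]) :
    Submodule (ZpLoc p) (ℚ × ℚ) where
  carrier := {v | ‖(v.1 : ℚ_[p]) - a * v.2‖ ≤ 1}
  zero_mem' := by simp
  add_mem' := by
    intro v w hv hw
    simp only [Set.mem_ofPred_eq, Prod.fst_add, Prod.snd_add, Rat.cast_add] at *
    have : (v.1 : ℚ_[p]) + w.1 - a * (v.2 + w.2) = (v.1 - a * v.2) + (w.1 - a * w.2) := by ring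
    rw [this]
    exact (Padic.nonarchimedean _ _).trans (max_le hv hw)
  smul_mem' := by
    intro r v hv
    simp only [Set.mem_ofPred_eq, Prod.smul_fst, Prod.smul_snd] at *
    simp only [Algebra.smul_def, Rat.cast_mul]
    have : ((algebraMap (ZpLoc p) ℚ r : ℚ) : ℚ_[p]) * v.1 -
        a * ((algebraMap (ZpLoc p) ℚ r : ℚ) * v.2) =
        (algebraMap (ZpLoc p) ℚ r : ℚ) * (v.1 - a * v.2) := by ring
    rw [this, norm_mul]
    exact mul_le_one₀ (zp_norm_le p r) (norm_nonneg _) hv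

lemma zpExt_div (p : ℕ) [hp : Fact p.Prime] [Algebra (ZpLoc p) ℚ] [IsFractionRing (ZpLoc p) ℚ]
    (a : ℚ_[p]) (ha : ∀ q : ℚ, (q : ℚ_[p]) ≠ a)
    (D : Submodule (ZpLoc p) (zpExt p a))
    (hD : ∀ r : ZpLoc p, r ≠ 0 → ∀ d ∈ D, ∃ d' ∈ D, r • d' = d) : D = ⊥ := by
  rw [Submodule.eq_bot_iff]
  intro d hd
  have hinj := IsFractionRing.injective (ZpLoc p) ℚ
  have key : ∀ n : ℕ, ‖((d.1.1 : ℚ) : ℚ_[p]) - a * (d.1.2 : ℚ)‖ ≤ ((p : ℝ)⁻¹) ^ n := by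
    intro n
    have hr : ((p : ZpLoc p)) ^ n ≠ 0 := by
      apply pow_ne_zero
      intro h
      have := congrArg (algebraMap (ZpLoc p) ℚ) h
      simp only [map_natCast, map_zero] at this
      exact hp.out.ne_zero (by exact_mod_cast this)
    obtain ⟨d', -, rfl⟩ := hD _ hr d hd
    have h' : ‖((d'.1.1 : ℚ) : ℚ_[p]) - a * (d'.1.2 : ℚ)‖ ≤ 1 := d'.2
    simp only [Submodule.coe_smul, Prod.smul_fst, Prod.smul_snd]
    simp only [Algebra.smul_def, map_pow,
      map_natCast, Rat.cast_mul, Rat.cast_pow, Rat.cast_natCast]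
    have : (p : ℚ_[p]) ^ n * (d'.1.1 : ℚ) - a * ((p : ℚ_[p]) ^ n * (d'.1.2 : ℚ)) =
      (p : ℚ_[p]) ^ n * ((d'.1.1 : ℚ) - a * (d'.1.2 : ℚ)) := by ring
    rw [this, norm_mul, norm_pow, Padic.norm_p]
    exact mul_le_of_le_one_right (by positivity) h'
  have h0 : ‖((d.1.1 : ℚ) : ℚ_[p]) - a * (d.1.2 : ℚ)‖ ≤ 0 := by
    refine ge_of_tendsto' (tendsto_pow_atTop_nhds_zero_of_lt_one (by positivity) ?_) key
    exact inv_lt_one_of_one_lt₀ (mod_cast hp.out.one_lt)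
  have h1 : ((d.1.1 : ℚ) : ℚ_[p]) = a * (d.1.2 : ℚ) := sub_eq_zero.mp (norm_le_zero_iff.mp h0)
  have h2 : d.1.2 = 0 := by
    by_contra hne
    have hne' : ((d.1.2 : ℚ) : ℚ_[p]) ≠ 0 := by exact_mod_cast hne
    apply ha (d.1.1 / d.1.2)
    rw [Rat.cast_div, h1, mul_div_cancel_right₀ _ hne']
  have h3 : d.1.1 = 0 := by
    rw [h2] at h1
    simpa using h1
  exact Subtype.ext (Prod.ext h3 h2)

/-- Over the (non-complete) discrete valuation ring `ℤ_(p)`, there is a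
`ℤ_(p)`-module `M` and a non-split short exact sequence
`0 → ℤ_(p) → M → ℚ → 0`; moreover `M` is not finitely generated and its
maximal divisible submodule is zero. Here `ℚ` carries its `ℤ_(p)`-module
structure as the fraction field of `ℤ_(p)`. -/
theorem zploc_nonsplit_extension (p : ℕ) [Fact p.Prime]
    [Algebra (ZpLoc p) ℚ] [IsFractionRing (ZpLoc p) ℚ] :
    ∃ (M : ModuleCat.{0} (ZpLoc p)) (i : ZpLoc p →ₗ[ZpLoc p] M)
      (f : M →ₗ[ZpLoc p] ℚ),
      Function.Injective i ∧
      Function.Surjective f ∧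
      LinearMap.range i = LinearMap.ker f ∧
      (¬ ∃ s : ℚ →ₗ[ZpLoc p] M, f ∘ₗ s = LinearMap.id) ∧
      (¬ Module.Finite (ZpLoc p) M) ∧
      (∀ D : Submodule (ZpLoc p) M,
        (∀ r : ZpLoc p, r ≠ 0 → ∀ d ∈ D, ∃ d' ∈ D, r • d' = d) → D = ⊥) := by
  obtain ⟨a, ha⟩ := zp_exists_irr p
  have hp : Nat.Prime p := Fact.out
  have hinj := IsFractionRing.injective (ZpLoc p) ℚ
  have hsurj : Function.Surjective
      ((LinearMap.snd (ZpLoc p) ℚ ℚ) ∘ₗ (zpExt p a).subtype) := by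
    intro y
    obtain ⟨x, hx⟩ := Padic.rat_dense p (a * (y : ℚ_[p])) one_pos
    refine ⟨⟨(x, y), ?_⟩, rfl⟩
    change ‖(x : ℚ_[p]) - a * (y : ℚ)‖ ≤ 1
    rw [norm_sub_rev]
    exact hx.le
  have hdiv := zpExt_div p a ha
  refine ⟨ModuleCat.of (ZpLoc p) (zpExt p a),
    LinearMap.codRestrict (zpExt p a)
      ((LinearMap.inl (ZpLoc p) ℚ ℚ) ∘ₗ Algebra.linearMap (ZpLoc p) ℚ) ?_,
    (LinearMap.snd (ZpLoc p) ℚ ℚ) ∘ₗ (zpExt p a).subtype, ?_, hsurj, ?_, ?_, ?_, hdiv⟩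
  · intro r
    change ‖((algebraMap (ZpLoc p) ℚ r : ℚ) : ℚ_[p]) - a * ((0 : ℚ) : ℚ_[p])‖ ≤ 1
    simpa using zp_norm_le p r
  · intro r s h
    exact hinj (congrArg (fun v : zpExt p a => v.1.1) h)
  · apply le_antisymm
    · rintro _ ⟨r, rfl⟩
      rfl
    · rintro ⟨⟨x, y⟩, hv⟩ h
      have hy : y = 0 := h
      subst hy
      have hv' : ‖(x : ℚ_[p]) - a * ((0 : ℚ) : ℚ_[p])‖ ≤ 1 := hv
      obtain ⟨r, hr⟩ := zp_exists_of_norm_le p x (by simpa using hv')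
      exact ⟨r, Subtype.ext (Prod.ext hr rfl)⟩
  · rintro ⟨s, hs⟩
    have hb := hdiv (LinearMap.range s) (by
      rintro r hr _ ⟨q, rfl⟩
      have hr' : algebraMap (ZpLoc p) ℚ r ≠ 0 := by
        rwa [Ne, map_eq_zero_iff _ hinj]
      refine ⟨s ((algebraMap (ZpLoc p) ℚ r)⁻¹ * q), ⟨_, rfl⟩, ?_⟩
      refine (s.map_smul r _).symm.trans ?_
      rw [Algebra.smul_def, mul_inv_cancel_left₀ hr'])
    have h1 : s 1 = 0 := (Submodule.eq_bot_iff _).mp hb _ ⟨1, rfl⟩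
    have h2 := LinearMap.congr_fun hs 1
    rw [LinearMap.comp_apply, h1, map_zero] at h2
    exact zero_ne_one h2
  · intro hfin
    have hfin' : Module.Finite (ZpLoc p) (zpExt p a) := hfin
    have hQ : Module.Finite (ZpLoc p) ℚ := Module.Finite.of_surjective _ hsurj
    have hI : Algebra.IsIntegral (ZpLoc p) ℚ := Algebra.IsIntegral.of_finite _ _
    have hF : IsField (ZpLoc p) := isField_of_isIntegral_of_isField hinj (Field.toIsField ℚ)
    have hp0 : (p : ZpLoc p) ≠ 0 := by
      intro h
      have := congrArg (algebraMap (ZpLoc p) ℚ) h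
      simp only [map_natCast, map_zero] at this
      exact hp.ne_zero (by exact_mod_cast this)
    obtain ⟨b, hb⟩ := hF.mul_inv_cancel hp0
    have h2 := congrArg (algebraMap (ZpLoc p) ℚ) hb
    simp only [map_mul, map_natCast, map_one] at h2
    have h3 := congrArg (fun q : ℚ => ‖(q : ℚ_[p])‖) h2
    simp only [Rat.cast_mul, Rat.cast_natCast, norm_mul, Rat.cast_one, norm_one] at h3
    have h4 := zp_norm_le p b
    have h5 : ‖(p : ℚ_[p])‖ < 1 := Padic.norm_p_lt_one
    nlinarith [norm_nonneg (p : ℚ_[p])]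
end
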